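/- arXiv:2509.06417 — 4 statements merged into one kernel-verified Lean document; each statement's English description precedes it below -/
import Mathlib

section
/- For every complex number z, s₀(z)³ + s₁(z)³ + s₂(z)³ − 3·s₀(z)·s₁(z)·s₂(z) = 1. -/
/-- The three cube roots of unity: ζ₀ = 1, ζ₁ = (−1+i√3)/2, ζ₂ = (−1−i√3)/2. -/
noncomputable def ζ : Fin 3 → ℂ :=
  ![1, (-1 + Complex.I * Real.sqrt 3) / 2, (-1 - Complex.I * Real.sqrt 3) / 2]

/-- The generalized trigonometric functions
`s_k(z) = (1/3)(ζ₀^{−k} e^{ζ₀ z} + ζ₁^{−k} e^{ζ₁ z} + ζ₂^{−k} e^{ζ₂ z})`. -/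
noncomputable def s (k : ℕ) (z : ℂ) : ℂ :=
  (1 / 3) * (Complex.exp (ζ 0 * z) / (ζ 0) ^ k + Complex.exp (ζ 1 * z) / (ζ 1) ^ k +
    Complex.exp (ζ 2 * z) / (ζ 2) ^ k)

/-! The functions `s k` are, up to the factor `1 / 3`, a discrete Fourier transform of the
exponentials `exp (ζ j * z)`; inverting it gives
`s 0 z + ζ j * s 1 z + ζ j ^ 2 * s 2 z = exp (ζ j * z)`. The left-hand sides are the three linear
factors of `x ^ 3 + y ^ 3 + t ^ 3 - 3 * x * y * t`, and the product of the right-hand sides is `1`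
because the cube roots of unity sum to zero. -/

theorem cube_add_cube_add_cube_sub_three_mul {R : Type*} [CommRing R] {ω : R}
    (hω : ω ^ 2 + ω + 1 = 0) (x y t : R) :
    x ^ 3 + y ^ 3 + t ^ 3 - 3 * x * y * t =
      (x + y + t) * (x + ω * y + ω ^ 2 * t) * (x + ω ^ 2 * y + ω * t) := by
  have ω_cube : ω ^ 3 = 1 := by linear_combination (ω - 1) * hω
  have quadratic_factor : (x + ω * y + ω ^ 2 * t) * (x + ω ^ 2 * y + ω * t) =
      x ^ 2 + y ^ 2 + t ^ 2 - x * y - y * t - x * t := by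
    linear_combination (y ^ 2 + t ^ 2 + y * t * ω) * ω_cube + (x * y + x * t + y * t) * hω
  linear_combination -(x + y + t) * quadratic_factor

theorem geom_sum_eq_ite_of_pow_eq_one {R : Type*} [Ring R] [NoZeroDivisors R] [DecidableEq R]
    {x : R} {n : ℕ} (hx : x ^ n = 1) :
    ∑ k ∈ Finset.range n, x ^ k = if x = 1 then (n : R) else 0 := by
  split_ifs with h
  · simp [h]
  · have : (x - 1) * ∑ k ∈ Finset.range n, x ^ k = 0 := by rw [mul_geom_sum, hx, sub_self]
    exact (mul_eq_zero.mp this).resolve_left (sub_ne_zero.mpr h)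

theorem sum_pow_mul_sum_div_pow {ι K : Type*} [Fintype ι] [Field K] {n : ℕ} [NeZero n]
    {ξ : ι → K} (hinj : Function.Injective ξ) (hpow : ∀ i, ξ i ^ n = 1) (a : ι → K) (j : ι) :
    ∑ k ∈ Finset.range n, ξ j ^ k * ∑ i, a i / ξ i ^ k = n * a j := by
  classical
  have orthogonality (i : ι) :
      ∑ k ∈ Finset.range n, (ξ j / ξ i) ^ k = if j = i then (n : K) else 0 := by
    have hne : ξ i ≠ 0 := (IsUnit.of_pow_eq_one (hpow i) (NeZero.ne n)).ne_zero
    rw [geom_sum_eq_ite_of_pow_eq_one (by rw [div_pow, hpow, hpow, div_one])]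
    simp only [div_eq_one_iff_eq hne, hinj.eq_iff]
  calc ∑ k ∈ Finset.range n, ξ j ^ k * ∑ i, a i / ξ i ^ k
      = ∑ i, a i * ∑ k ∈ Finset.range n, (ξ j / ξ i) ^ k := by
        simp only [Finset.mul_sum]
        rw [Finset.sum_comm]
        refine Finset.sum_congr rfl fun i _ => Finset.sum_congr rfl fun k _ => ?_
        rw [div_pow, mul_div_left_comm]
    _ = ∑ i, a i * if j = i then (n : K) else 0 := by simp only [orthogonality]
    _ = n * a j := by
        simp only [mul_ite, mul_zero, Finset.sum_ite_eq, Finset.mem_univ, if_true, mul_comm]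

theorem ζ_zero : ζ 0 = 1 := rfl

theorem ζ_one_sq : ζ 1 ^ 2 = ζ 2 := by
  have sqrt_three_sq : (Real.sqrt 3 : ℂ) ^ 2 = 3 := by
    exact_mod_cast Real.sq_sqrt (show (0 : ℝ) ≤ 3 by norm_num)
  simp only [ζ, Matrix.cons_val]
  linear_combination (1 / 4 : ℂ) * (Real.sqrt 3 : ℂ) ^ 2 * Complex.I_sq - (1 / 4) * sqrt_three_sq

theorem ζ_one_sq_add_self_add_one : ζ 1 ^ 2 + ζ 1 + 1 = 0 := by
  rw [ζ_one_sq]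
  simp only [ζ, Matrix.cons_val]
  ring

theorem isPrimitiveRoot_ζ_one : IsPrimitiveRoot (ζ 1) 3 := by
  rw [← Polynomial.isRoot_cyclotomic_iff, Polynomial.cyclotomic_three]
  simpa using ζ_one_sq_add_self_add_one

theorem ζ_eq_pow (j : Fin 3) : ζ j = ζ 1 ^ (j : ℕ) := by
  fin_cases j
  · exact ζ_zero.trans (pow_zero _).symm
  · exact (pow_one _).symm
  · exact ζ_one_sq.symm

theorem ζ_injective : Function.Injective ζ := fun i j h =>
  Fin.ext <| isPrimitiveRoot_ζ_one.pow_inj i.isLt j.isLt <| by rwa [← ζ_eq_pow, ← ζ_eq_pow]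

theorem ζ_cube (j : Fin 3) : ζ j ^ 3 = 1 := by
  rw [ζ_eq_pow, pow_right_comm, isPrimitiveRoot_ζ_one.pow_eq_one, one_pow]

theorem ζ_two_sq : ζ 2 ^ 2 = ζ 1 := by
  rw [← ζ_one_sq]
  linear_combination ζ 1 * ζ_cube 1

theorem sum_ζ : ∑ j, ζ j = 0 := by
  rw [Fin.sum_univ_three, ζ_zero, ← ζ_one_sq]
  linear_combination ζ_one_sq_add_self_add_one

theorem s_eq_sum (k : ℕ) (z : ℂ) : s k z = 1 / 3 * ∑ i, Complex.exp (ζ i * z) / ζ i ^ k := by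
  rw [s, Fin.sum_univ_three]

theorem sum_ζ_pow_mul_s (j : Fin 3) (z : ℂ) :
    ∑ k ∈ Finset.range 3, ζ j ^ k * s k z = Complex.exp (ζ j * z) := by
  simp only [s_eq_sum, mul_left_comm _ (1 / 3 : ℂ), ← Finset.mul_sum]
  rw [sum_pow_mul_sum_div_pow ζ_injective ζ_cube]
  push_cast
  ring

theorem prod_exp_ζ_mul (z : ℂ) : ∏ j, Complex.exp (ζ j * z) = 1 := by
  rw [← Complex.exp_sum, ← Finset.sum_mul, sum_ζ, zero_mul, Complex.exp_zero]

/-- The main identity (1.4):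
`s₀(z)³ + s₁(z)³ + s₂(z)³ − 3 s₀(z) s₁(z) s₂(z) = 1` for all `z ∈ ℂ`. -/
theorem main_identity (z : ℂ) :
    s 0 z ^ 3 + s 1 z ^ 3 + s 2 z ^ 3 - 3 * s 0 z * s 1 z * s 2 z = 1 := by
  have factor_zero : s 0 z + s 1 z + s 2 z = Complex.exp (ζ 0 * z) := by
    simpa [Finset.sum_range_succ, ζ_zero] using sum_ζ_pow_mul_s 0 z
  have factor_one : s 0 z + ζ 1 * s 1 z + ζ 1 ^ 2 * s 2 z = Complex.exp (ζ 1 * z) := by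
    simpa [Finset.sum_range_succ] using sum_ζ_pow_mul_s 1 z
  have factor_two : s 0 z + ζ 1 ^ 2 * s 1 z + ζ 1 * s 2 z = Complex.exp (ζ 2 * z) := by
    simpa [Finset.sum_range_succ, ζ_one_sq, ζ_two_sq] using sum_ζ_pow_mul_s 2 z
  rw [cube_add_cube_add_cube_sub_three_mul ζ_one_sq_add_self_add_one, factor_zero, factor_one,
    factor_two, ← prod_exp_ζ_mul z, Fin.prod_univ_three]
end

section
/- For every z ∈ ℂ and all real numbers σ ≥ 0 and τ ≥ 0, one has d(zσ)·d(zτ) ≤ d(z(σ+τ)). -/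
/-- The majorant `d(w) = e^{|Im w|} cosh((√3/2) Re w)`. -/
noncomputable def dmaj (w : ℂ) : ℝ :=
  Real.exp |w.im| * Real.cosh (Real.sqrt 3 / 2 * w.re)

theorem mul_left_mul_mul_left_nonneg {R : Type*} [CommRing R] [LinearOrder R] [IsOrderedRing R]
    (c : R) {x y : R} (h : 0 ≤ x * y) : 0 ≤ (c * x) * (c * y) := by
  rw [mul_mul_mul_comm]
  exact mul_nonneg (mul_self_nonneg c) h

theorem exp_abs_add_of_mul_nonneg {x y : ℝ} (h : 0 ≤ x * y) :
    Real.exp |x + y| = Real.exp |x| * Real.exp |y| := by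
  rw [(abs_add_eq_add_abs_iff x y).mpr (mul_nonneg_iff.mp h), Real.exp_add]

theorem sinh_mul_sinh_nonneg_iff {x y : ℝ} : 0 ≤ Real.sinh x * Real.sinh y ↔ 0 ≤ x * y := by
  simp only [mul_nonneg_iff, Real.sinh_nonneg_iff, Real.sinh_nonpos_iff]

theorem cosh_mul_cosh_le_cosh_add_iff {x y : ℝ} :
    Real.cosh x * Real.cosh y ≤ Real.cosh (x + y) ↔ 0 ≤ x * y := by
  rw [Real.cosh_add, le_add_iff_nonneg_right, sinh_mul_sinh_nonneg_iff]

/-- The hypotheses say that `v` and `w` lie in a common closed quadrant of the plane. -/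
theorem dmaj_mul_le_general {v w : ℂ} (hre : 0 ≤ v.re * w.re) (him : 0 ≤ v.im * w.im) :
    dmaj v * dmaj w ≤ dmaj (v + w) := by
  have hcosh : Real.cosh (√3 / 2 * v.re) * Real.cosh (√3 / 2 * w.re) ≤
      Real.cosh (√3 / 2 * v.re + √3 / 2 * w.re) :=
    cosh_mul_cosh_le_cosh_add_iff.mpr (mul_left_mul_mul_left_nonneg _ hre)
  calc
    dmaj v * dmaj w
      = Real.exp |v.im + w.im| * (Real.cosh (√3 / 2 * v.re) * Real.cosh (√3 / 2 * w.re)) := by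
        rw [exp_abs_add_of_mul_nonneg him, dmaj, dmaj, mul_mul_mul_comm]
    _ ≤ Real.exp |v.im + w.im| * Real.cosh (√3 / 2 * v.re + √3 / 2 * w.re) := by gcongr
    _ = dmaj (v + w) := by rw [dmaj, Complex.add_im, Complex.add_re, mul_add]

/-- Multiplicativity estimate: for every `z ∈ ℂ` and reals `σ, τ ≥ 0`,
`d(zσ) · d(zτ) ≤ d(z(σ+τ))`. -/
theorem dmaj_mul_le (z : ℂ) (σ τ : ℝ) (hσ : 0 ≤ σ) (hτ : 0 ≤ τ) :
    dmaj (z * (σ : ℂ)) * dmaj (z * (τ : ℂ)) ≤ dmaj (z * ((σ + τ : ℝ) : ℂ)) := by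
  rw [Complex.ofReal_add, mul_add]
  apply dmaj_mul_le_general <;> simpa only [Complex.re_mul_ofReal, Complex.im_mul_ofReal] using
    mul_left_mul_mul_left_nonneg _ (mul_nonneg hσ hτ)
end

section
/- Let g : ℝ → ℂ be continuous and let u, v : ℝ → ℂ be three times differentiable functions satisfying u'''(x) = g(x)·u(x) and v'''(x) = g(x)·v(x) for all x. Then the Wronskian W(x) = u(x)v'(x) − v(x)u'(x) is three times differentiable and satisfies W'''(x) = −g(x)·W(x) for all x ∈ ℝ. -/
/-!
The derivative of `W = u v' - v u'` is `u v'' - v u''`. When `u''' = g u` and `v''' = g v`, the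
third-order terms `u v''' - v u'''` of the next derivative cancel, so `W''` is again a Wronskian,
namely that of `u'` and `v'`. The first formula, applied to this pair, gives
`W''' = u' v''' - v' u''' = -g W`.
-/

section Wronskian

variable {𝕜 𝔸 : Type*} [NontriviallyNormedField 𝕜] [NormedCommRing 𝔸] [NormedAlgebra 𝕜 𝔸]
  {u v : 𝕜 → 𝔸} {x : 𝕜}

/-- The Wronskian `u v' - v u'` of two functions of one variable, built with `deriv`; it is
meaningful at points where both functions are differentiable. -/
noncomputable def wronskian (u v : 𝕜 → 𝔸) (x : 𝕜) : 𝔸 :=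
  u x * deriv v x - v x * deriv u x

theorem hasDerivAt_wronskian
    (hu : DifferentiableAt 𝕜 u x) (hu' : DifferentiableAt 𝕜 (deriv u) x)
    (hv : DifferentiableAt 𝕜 v x) (hv' : DifferentiableAt 𝕜 (deriv v) x) :
    HasDerivAt (wronskian u v) (u x * deriv (deriv v) x - v x * deriv (deriv u) x) x := by
  refine ((hu.hasDerivAt.mul hv'.hasDerivAt).sub
    (hv.hasDerivAt.mul hu'.hasDerivAt)).congr_deriv ?_
  ring

theorem deriv_wronskian
    (hu : Differentiable 𝕜 u) (hu' : Differentiable 𝕜 (deriv u))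
    (hv : Differentiable 𝕜 v) (hv' : Differentiable 𝕜 (deriv v)) :
    deriv (wronskian u v) = fun x ↦ u x * deriv (deriv v) x - v x * deriv (deriv u) x :=
  funext fun x ↦ (hasDerivAt_wronskian (hu x) (hu' x) (hv x) (hv' x)).deriv

theorem hasDerivAt_deriv_wronskian
    (hu : Differentiable 𝕜 u) (hu' : Differentiable 𝕜 (deriv u))
    (hu'' : DifferentiableAt 𝕜 (deriv (deriv u)) x)
    (hv : Differentiable 𝕜 v) (hv' : Differentiable 𝕜 (deriv v))
    (hv'' : DifferentiableAt 𝕜 (deriv (deriv v)) x)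
    (h : u x * deriv (deriv (deriv v)) x = v x * deriv (deriv (deriv u)) x) :
    HasDerivAt (deriv (wronskian u v)) (wronskian (deriv u) (deriv v) x) x := by
  rw [deriv_wronskian hu hu' hv hv']
  refine (((hu x).hasDerivAt.mul hv''.hasDerivAt).sub
    ((hv x).hasDerivAt.mul hu''.hasDerivAt)).congr_deriv ?_
  rw [h, wronskian]
  ring

theorem wronskian_adjoint_equation_general {g : 𝕜 → 𝔸}
    (hu : Differentiable 𝕜 u) (hu' : Differentiable 𝕜 (deriv u))
    (hu'' : Differentiable 𝕜 (deriv (deriv u)))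
    (hv : Differentiable 𝕜 v) (hv' : Differentiable 𝕜 (deriv v))
    (hv'' : Differentiable 𝕜 (deriv (deriv v)))
    (hu_eq : ∀ x, deriv (deriv (deriv u)) x = g x * u x)
    (hv_eq : ∀ x, deriv (deriv (deriv v)) x = g x * v x) :
    (Differentiable 𝕜 (wronskian u v) ∧ Differentiable 𝕜 (deriv (wronskian u v)) ∧
      Differentiable 𝕜 (deriv (deriv (wronskian u v)))) ∧
    ∀ x, deriv (deriv (deriv (wronskian u v))) x = -(g x) * wronskian u v x := by
  have h_cancel (x : 𝕜) : u x * deriv (deriv (deriv v)) x = v x * deriv (deriv (deriv u)) x := by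
    rw [hu_eq, hv_eq]
    ring
  have h_first (x : 𝕜) := hasDerivAt_wronskian (hu x) (hu' x) (hv x) (hv' x)
  have h_second (x : 𝕜) :=
    hasDerivAt_deriv_wronskian hu hu' (hu'' x) hv hv' (hv'' x) (h_cancel x)
  have h_third (x : 𝕜) :
      HasDerivAt (deriv (deriv (wronskian u v))) (-(g x) * wronskian u v x) x := by
    rw [funext fun y ↦ (h_second y).deriv]
    refine (hasDerivAt_wronskian (hu' x) (hu'' x) (hv' x) (hv'' x)).congr_deriv ?_
    rw [hu_eq, hv_eq, wronskian]
    ring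
  exact ⟨⟨fun x ↦ (h_first x).differentiableAt, fun x ↦ (h_second x).differentiableAt,
    fun x ↦ (h_third x).differentiableAt⟩, fun x ↦ (h_third x).deriv⟩

end Wronskian

/-- If `u''' = g u` and `v''' = g v` with `g` continuous, then the Wronskian
`W = u v' − v u'` is three times differentiable and satisfies `W''' = −g W`. -/
theorem wronskian_adjoint_equation (g : ℝ → ℂ) (hg : Continuous g) (u v : ℝ → ℂ)
    (hu1 : Differentiable ℝ u) (hu2 : Differentiable ℝ (deriv u))
    (hu3 : Differentiable ℝ (deriv (deriv u)))
    (hv1 : Differentiable ℝ v) (hv2 : Differentiable ℝ (deriv v))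
    (hv3 : Differentiable ℝ (deriv (deriv v)))
    (hueq : ∀ x : ℝ, deriv (deriv (deriv u)) x = g x * u x)
    (hveq : ∀ x : ℝ, deriv (deriv (deriv v)) x = g x * v x)
    (W : ℝ → ℂ) (hW : ∀ x : ℝ, W x = u x * deriv v x - v x * deriv u x) :
    (Differentiable ℝ W ∧ Differentiable ℝ (deriv W) ∧ Differentiable ℝ (deriv (deriv W))) ∧
    (∀ x : ℝ, deriv (deriv (deriv W)) x = -(g x) * W x) := by
  obtain rfl : W = wronskian u v := funext hW
  exact wronskian_adjoint_equation_general hu1 hu2 hu3 hv1 hv2 hv3 hueq hveq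
end

section
/- Let g, g₁ : ℝ → ℂ be continuous and let u, u₁, w, w₁ : ℝ → ℂ be three times differentiable functions satisfying u''' = g·u, u₁''' = g·u₁ + g₁·u, w''' = −g·w and w₁''' = −g·w₁ − g₁·w on ℝ. Then the function Ġ(x) = u₁(x)w''(x) − u₁'(x)w'(x) + u₁''(x)w(x) + u(x)w₁''(x) − u'(x)w₁'(x) + u''(x)w₁(x) is constant in x. -/
/-!
Lagrange's identity `(u w'' - u' w' + u'' w)' = u w''' + u''' w` shows that the perturbation `g₁`
contributes `u g₁ w` to the derivative of the concomitant of `u₁` and `w`, and `-u g₁ w` to that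
of `u` and `w₁`, while all terms containing `g` cancel within each concomitant.
-/

section BilinearConcomitant

variable {𝕜 A : Type*} [NontriviallyNormedField 𝕜] [NormedRing A] [NormedAlgebra 𝕜 A]

/-- The bilinear concomitant `u w'' - u' w' + u'' w` of the third-order operator `d³/dx³`, whose
derivative measures the failure of `u''' w` and `-u w'''` to agree. The factor from `u` is always
on the left, so that `A` may be noncommutative. -/
noncomputable def bilinearConcomitant (u w : 𝕜 → A) (x : 𝕜) : A :=
  u x * deriv (deriv w) x - deriv u x * deriv w x + deriv (deriv u) x * w x

theorem hasDerivAt_bilinearConcomitant {u w : 𝕜 → A} {x : 𝕜}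
    (hu : DifferentiableAt 𝕜 u x) (hu' : DifferentiableAt 𝕜 (deriv u) x)
    (hu'' : DifferentiableAt 𝕜 (deriv (deriv u)) x)
    (hw : DifferentiableAt 𝕜 w x) (hw' : DifferentiableAt 𝕜 (deriv w) x)
    (hw'' : DifferentiableAt 𝕜 (deriv (deriv w)) x) :
    HasDerivAt (bilinearConcomitant u w)
      (u x * deriv (deriv (deriv w)) x + deriv (deriv (deriv u)) x * w x) x := by
  have product_rule := ((hu.hasDerivAt.mul hw''.hasDerivAt).sub
    (hu'.hasDerivAt.mul hw'.hasDerivAt)).add (hu''.hasDerivAt.mul hw.hasDerivAt)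
  exact product_rule.congr_deriv (by abel)

end BilinearConcomitant

theorem differentiated_concomitant_constant_general {𝕜 A : Type*} [RCLike 𝕜] [NormedRing A]
    [NormedAlgebra 𝕜 A] {g g₁ u u₁ w w₁ G : 𝕜 → A}
    (hu : Differentiable 𝕜 u) (hu' : Differentiable 𝕜 (deriv u))
    (hu'' : Differentiable 𝕜 (deriv (deriv u)))
    (hu₁ : Differentiable 𝕜 u₁) (hu₁' : Differentiable 𝕜 (deriv u₁))
    (hu₁'' : Differentiable 𝕜 (deriv (deriv u₁)))
    (hw : Differentiable 𝕜 w) (hw' : Differentiable 𝕜 (deriv w))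
    (hw'' : Differentiable 𝕜 (deriv (deriv w)))
    (hw₁ : Differentiable 𝕜 w₁) (hw₁' : Differentiable 𝕜 (deriv w₁))
    (hw₁'' : Differentiable 𝕜 (deriv (deriv w₁)))
    (hu_eq : ∀ x, deriv (deriv (deriv u)) x = u x * g x)
    (hu₁_eq : ∀ x, deriv (deriv (deriv u₁)) x = u₁ x * g x + u x * g₁ x)
    (hw_eq : ∀ x, deriv (deriv (deriv w)) x = -(g x * w x))
    (hw₁_eq : ∀ x, deriv (deriv (deriv w₁)) x = -(g x * w₁ x) - g₁ x * w x)
    (hG : ∀ x, G x =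
      u₁ x * deriv (deriv w) x - deriv u₁ x * deriv w x + deriv (deriv u₁) x * w x +
      u x * deriv (deriv w₁) x - deriv u x * deriv w₁ x + deriv (deriv u) x * w₁ x) (x y : 𝕜) :
    G x = G y := by
  have G_eq : G = bilinearConcomitant u₁ w + bilinearConcomitant u w₁ := by
    funext z
    rw [hG, Pi.add_apply, bilinearConcomitant, bilinearConcomitant]
    abel
  have deriv_u₁_w (z : 𝕜) : HasDerivAt (bilinearConcomitant u₁ w) (u z * g₁ z * w z) z := by
    refine (hasDerivAt_bilinearConcomitant (hu₁ z) (hu₁' z) (hu₁'' z)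
      (hw z) (hw' z) (hw'' z)).congr_deriv ?_
    rw [hw_eq, hu₁_eq]
    noncomm_ring
  have deriv_u_w₁ (z : 𝕜) : HasDerivAt (bilinearConcomitant u w₁) (-(u z * g₁ z * w z)) z := by
    refine (hasDerivAt_bilinearConcomitant (hu z) (hu' z) (hu'' z)
      (hw₁ z) (hw₁' z) (hw₁'' z)).congr_deriv ?_
    rw [hw₁_eq, hu_eq]
    noncomm_ring
  have deriv_G (z : 𝕜) : HasDerivAt G 0 z := by
    rw [G_eq]
    exact ((deriv_u₁_w z).add (deriv_u_w₁ z)).congr_deriv (add_neg_cancel _)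
  exact is_const_of_deriv_eq_zero (fun z => (deriv_G z).differentiableAt)
    (fun z => (deriv_G z).deriv) x y

/-- Key computation in Lemma 2.6: if `u''' = g u`, `u₁''' = g u₁ + g₁ u`, `w''' = −g w`
and `w₁''' = −g w₁ − g₁ w` (with `g`, `g₁` continuous), then
`Ġ = u₁ w'' − u₁' w' + u₁'' w + u w₁'' − u' w₁' + u'' w₁` is constant. -/
theorem differentiated_concomitant_constant (g g1 : ℝ → ℂ)
    (hg : Continuous g) (hg1 : Continuous g1) (u u1 w w1 : ℝ → ℂ)
    (hu1 : Differentiable ℝ u) (hu2 : Differentiable ℝ (deriv u))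
    (hu3 : Differentiable ℝ (deriv (deriv u)))
    (hu11 : Differentiable ℝ u1) (hu12 : Differentiable ℝ (deriv u1))
    (hu13 : Differentiable ℝ (deriv (deriv u1)))
    (hw1 : Differentiable ℝ w) (hw2 : Differentiable ℝ (deriv w))
    (hw3 : Differentiable ℝ (deriv (deriv w)))
    (hw11 : Differentiable ℝ w1) (hw12 : Differentiable ℝ (deriv w1))
    (hw13 : Differentiable ℝ (deriv (deriv w1)))
    (hueq : ∀ x : ℝ, deriv (deriv (deriv u)) x = g x * u x)
    (hu1eq : ∀ x : ℝ, deriv (deriv (deriv u1)) x = g x * u1 x + g1 x * u x)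
    (hweq : ∀ x : ℝ, deriv (deriv (deriv w)) x = -(g x) * w x)
    (hw1eq : ∀ x : ℝ, deriv (deriv (deriv w1)) x = -(g x) * w1 x - g1 x * w x)
    (Gdot : ℝ → ℂ)
    (hGdot : ∀ x : ℝ, Gdot x =
      u1 x * deriv (deriv w) x - deriv u1 x * deriv w x + deriv (deriv u1) x * w x +
      u x * deriv (deriv w1) x - deriv u x * deriv w1 x + deriv (deriv u) x * w1 x) :
    ∀ x y : ℝ, Gdot x = Gdot y :=
  differentiated_concomitant_constant_general (g := g) (g₁ := g1)
    hu1 hu2 hu3 hu11 hu12 hu13 hw1 hw2 hw3 hw11 hw12 hw13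
    (by simpa only [mul_comm] using hueq) (by simpa only [mul_comm] using hu1eq)
    (by simpa only [neg_mul] using hweq) (by simpa only [neg_mul] using hw1eq) hGdot
end
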